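/- arXiv:2304.05831 — 8 statements merged into one kernel-verified Lean document; each statement's English description precedes it below -/
import Mathlib

section
/- For every natural number k ≥ 1, a finite connected simple graph G has the property that every minimal dominating set of G is k-robust if and only if G is a sputnik graph. -/
/-!
Deleting edges can only destroy domination, so minimality of a minimal dominating set is preserved
automatically, and only domination has to be discussed.

If `G` is a sputnik graph and `D` dominates `G`, a vertex `v ∉ D` on a cycle has a pendant
neighbor, which must lie in `D` and whose edge to `v` survives every connected deletion; a vertex
`v ∉ D` on no cycle is only incident to bridges, none of which can be deleted.

For the converse, every dominating set contains a minimal one. Hence, by robustness, if a vertex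
`v` outside a dominating set `S` has a single neighbor `u` in `S`, then `uv` is a bridge
(`isBridge_of_unique_dominator`). Let `v` lie on a cycle through the edge `vu`, and suppose that
`v` has no pendant neighbor. The set `(V \ N[v]) ∪ {u}` cannot be dominating, because `vu` is no
bridge. An undominated vertex `w` is a neighbor of `v` with `N[w] ⊆ N[v]`, and `w` is not pendant,
so `vw` lies in a triangle. But now `(V \ N[w]) ∪ {v}` is dominating and meets `N[w]` only in `v`,
which makes `vw` a bridge: a contradiction.
-/

/-- A dominating set: every vertex is in `D` or has a neighbor in `D`. -/
def Dominating {V : Type*} (G : SimpleGraph V) (D : Set V) : Prop :=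
  ∀ v : V, v ∈ D ∨ ∃ u ∈ D, G.Adj u v

/-- A minimal dominating set: dominating, and no proper subset is dominating. -/
def MinDominating {V : Type*} (G : SimpleGraph V) (D : Set V) : Prop :=
  Dominating G D ∧ ∀ D' : Set V, D' ⊂ D → ¬Dominating G D'

/-- `D` is `k`-robust: after deleting any set `F` of at most `k` edges of `G`
that keeps the graph connected, `D` is still a minimal dominating set. -/
def RobustMDS {V : Type*} (G : SimpleGraph V) (k : ℕ) (D : Set V) : Prop :=
  ∀ F : Finset (Sym2 V), ↑F ⊆ G.edgeSet → F.card ≤ k →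
    (G.deleteEdges ↑F).Connected → MinDominating (G.deleteEdges ↑F) D

/-- A sputnik graph: every vertex on a cycle has a neighbor of degree 1
(a neighbor whose only neighbor is that vertex). -/
def Sputnik {V : Type*} (G : SimpleGraph V) : Prop :=
  ∀ v : V, (∃ c : G.Walk v v, c.IsCycle) →
    ∃ w : V, G.Adj v w ∧ G.neighborSet w = {v}

theorem Dominating.mono_graph {V : Type*} {G H : SimpleGraph V} {D : Set V}
    (h : Dominating H D) (hle : H ≤ G) : Dominating G D := fun v =>
  (h v).imp id fun ⟨u, hu, huv⟩ => ⟨u, hu, hle huv⟩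

theorem Dominating.exists_minDominating_subset {V : Type*} [Finite V] {G : SimpleGraph V}
    {S : Set V} (hS : Dominating G S) : ∃ D ⊆ S, MinDominating G D := by
  obtain ⟨D, hDS, hD⟩ := exists_minimal_le_of_wellFoundedLT (Dominating G) S hS
  exact ⟨D, hDS, hD.prop, fun D' hlt hD' => hD.not_lt hD' hlt⟩

/-- A minimal dominating set inside `S` dominates `v` through the edge `vu` alone, so robustness
forbids deleting that edge. -/
theorem isBridge_of_unique_dominator {V : Type*} [Finite V] {G : SimpleGraph V}
    (hG : G.Connected) {k : ℕ} (hk : 1 ≤ k)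
    (hrob : ∀ D : Set V, MinDominating G D → RobustMDS G k D)
    {S : Set V} (hS : Dominating G S) {u v : V} (huv : G.Adj v u) (hv : v ∉ S)
    (huniq : ∀ x ∈ S, G.Adj x v → x = u) : G.IsBridge s(v, u) := by
  by_contra hb
  obtain ⟨D, hDS, hD⟩ := hS.exists_minDominating_subset
  have hmin := hrob D hD {s(v, u)} (by simpa using huv) (by simpa using hk)
    (by simpa using hG.connected_delete_edge_of_not_isBridge hb)
  rcases hmin.1 v with h | ⟨x, hx, hxv⟩
  · exact hv (hDS h)
  · rw [SimpleGraph.deleteEdges_adj] at hxv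
    obtain rfl := huniq x (hDS hx) hxv.1
    exact hxv.2 (by simp [Sym2.eq_swap])

theorem not_isBridge_of_triangle {V : Type*} {G : SimpleGraph V} {v w x : V}
    (hvw : G.Adj v w) (hvx : G.Adj v x) (hxw : G.Adj x w) : ¬ G.IsBridge s(w, v) := by
  rw [SimpleGraph.isBridge_iff, not_not]
  have h₁ : (G.deleteEdges {s(w, v)}).Adj w x := by
    simp [hxw.symm, hvx.ne', hvw.ne']
  have h₂ : (G.deleteEdges {s(w, v)}).Adj x v := by
    simp [hvx.symm, hxw.ne, hvx.ne']
  exact h₁.reachable.trans h₂.reachable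

theorem sputnik_of_robust {V : Type*} [Finite V] {G : SimpleGraph V}
    (hG : G.Connected) {k : ℕ} (hk : 1 ≤ k)
    (hrob : ∀ D : Set V, MinDominating G D → RobustMDS G k D) : Sputnik G := by
  rintro v ⟨c, hc⟩
  by_contra! hleaf
  set u := c.snd
  have hvu : G.Adj v u := c.adj_snd hc.not_nil
  have hnb : ¬ G.IsBridge s(v, u) := fun hb =>
    hb.notMem_edges_of_isCycle hc (c.mk_start_snd_mem_edges hc.not_nil)
  have hndom : ¬ Dominating G {x | x = u ∨ (x ≠ v ∧ ¬ G.Adj v x)} := fun hS =>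
    hnb (isBridge_of_unique_dominator hG hk hrob hS hvu (by simp [hvu.ne])
      fun x hx hxv => hx.resolve_right fun h => h.2 hxv.symm)
  simp only [Dominating, Set.mem_ofPred_eq] at hndom
  push Not at hndom
  obtain ⟨w, ⟨hwu, hw⟩, hNw⟩ := hndom
  have hwv : w ≠ v := by
    rintro rfl
    exact hNw u (Or.inl rfl) hvu.symm
  have hvw : G.Adj v w := hw hwv
  have hsub : ∀ x, G.Adj w x → x ≠ v → G.Adj v x := fun x hwx hxv => by
    by_contra hvx
    exact hNw x (Or.inr ⟨hxv, hvx⟩) hwx.symm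
  obtain ⟨x, hwx, hxv⟩ : ∃ x, G.Adj w x ∧ x ≠ v := by
    by_contra! h
    refine hleaf w hvw (Set.ext fun x => ⟨fun hx => h x hx, ?_⟩)
    rintro rfl
    exact hvw.symm
  refine not_isBridge_of_triangle hvw (hsub x hwx hxv) hwx.symm
    (isBridge_of_unique_dominator hG hk hrob
      (S := {x | x = v ∨ (x ≠ w ∧ ¬ G.Adj w x)}) ?_ hvw.symm (by simp [hwv])
      fun x hx hxw => hx.resolve_right fun h => h.2 hxw.symm)
  -- `N[w] ⊆ N[v]`, so whatever is left out of the set is dominated by `v`.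
  intro y
  by_cases hyv : y = v
  · exact Or.inl (Or.inl hyv)
  by_cases hyw : y = w
  · exact Or.inr ⟨v, Or.inl rfl, hyw ▸ hvw⟩
  by_cases hwy : G.Adj w y
  · exact Or.inr ⟨v, Or.inl rfl, hsub y hwy hyv⟩
  · exact Or.inl (Or.inr ⟨hyw, hwy⟩)

/-- An edge whose removal is compatible with connectedness lies on a cycle, which can be based at
either end of the edge. -/
theorem exists_isCycle_of_deleteEdges_connected {V : Type*} {G : SimpleGraph V}
    {F : Set (Sym2 V)} (hF : (G.deleteEdges F).Connected) {u v : V} (huv : G.Adj u v)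
    (he : s(u, v) ∈ F) : ∃ c : G.Walk v v, c.IsCycle := by
  classical
  have hreach : (G.deleteEdges {s(u, v)}).Reachable u v :=
    (hF.preconnected u v).mono (G.deleteEdges_anti (by simpa using he))
  obtain ⟨a, c, hc, hec⟩ :=
    SimpleGraph.adj_and_reachable_delete_edges_iff_exists_cycle.mp ⟨huv, hreach⟩
  exact ⟨_, hc.rotate (c.snd_mem_support_of_mem_edges hec)⟩

theorem Sputnik.dominating_deleteEdges {V : Type*} {G : SimpleGraph V} (hs : Sputnik G)
    {D : Set V} (hD : Dominating G D) {F : Set (Sym2 V)}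
    (hF : (G.deleteEdges F).Connected) : Dominating (G.deleteEdges F) D := by
  intro v
  by_cases hv : v ∈ D
  · exact Or.inl hv
  right
  by_cases hcyc : ∃ c : G.Walk v v, c.IsCycle
  · obtain ⟨w, hvw, hw⟩ := hs v hcyc
    have hleaf : ∀ x, G.Adj w x → x = v := fun x hx => by
      have : x ∈ G.neighborSet w := hx
      simpa [hw] using this
    have hwD : w ∈ D := by
      rcases hD w with h | ⟨x, hx, hxw⟩
      · exact h
      · exact absurd (hleaf x hxw.symm ▸ hx) hv
    -- In the connected graph `G - F` the vertex `w` still has a neighbor, which can only be `v`.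
    have : Nontrivial V := ⟨v, w, hvw.ne⟩
    obtain ⟨x, hx⟩ := hF.preconnected.exists_adj_of_nontrivial w
    obtain rfl := hleaf x (G.deleteEdges_le F hx)
    exact ⟨w, hwD, hx⟩
  · obtain ⟨u, hu, huv⟩ := (hD v).resolve_left hv
    refine ⟨u, hu, SimpleGraph.deleteEdges_adj.mpr ⟨huv, fun he => hcyc ?_⟩⟩
    exact exists_isCycle_of_deleteEdges_connected hF huv he

/-- For every `k ≥ 1`, a finite connected graph has all of its minimal
dominating sets `k`-robust iff it is a sputnik graph. -/
theorem every_MDS_robust_iff_sputnik {V : Type*} [Fintype V]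
    (G : SimpleGraph V) (hG : G.Connected) (k : ℕ) (hk : 1 ≤ k) :
    (∀ D : Set V, MinDominating G D → RobustMDS G k D) ↔ Sputnik G :=
  ⟨sputnik_of_robust hG hk, fun hs _ hD _ _ _ hF =>
    ⟨hs.dominating_deleteEdges hD.1 hF, fun D' hlt hD' =>
      hD.2 D' hlt (hD'.mono_graph (G.deleteEdges_le _))⟩⟩
end

section
/- For every natural number k ≥ 2, a finite connected simple graph G has the property that every maximal matching of G is k-robust if and only if G is a tree or G is isomorphic to the cycle on four vertices. -/
/-!
Call an edge *cyclic* if it is not a bridge. Suppose every maximal matching of `G` is 2-robust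
and `G` is not a tree, so that some edge is cyclic.

Deleting one cyclic edge `uv` of a maximal matching `M` shows that every neighbour of `u` or `v`
is covered by `M` (`cov_of_cyc`). The exchange step `exists_swap` puts an edge `ab` into a
matching, discards the edges meeting `ab`, and extends to a maximal matching. With it one obtains:

* a vertex on a cyclic edge is covered by every maximal matching (`cov_of_cyc_vertex`);
* an edge sharing an endpoint with a cyclic edge is cyclic (`cyc_of_cyc`), so by connectedness
  all edges are cyclic and all maximal matchings are perfect;
* hence every path `u v x y` closes to a 4-cycle (`adj_of_path`): otherwise replacing `uv, xy` by
  `vx` would lead to a maximal matching missing `u`.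

Deleting both `uv` and `xy` uncovers the edge `vx`, so these two edges must separate `x` from `y`
(`not_reachable_of_path`). This forbids any further edge at a 4-cycle, and `G` is that 4-cycle.

Conversely, no edge of a tree can be deleted. In the 4-cycle, a matched edge `pq` forces the
opposite edge `rs` to be matched as well; an edge `pr` becomes uncovered only if both `pq` and `rs`
are deleted, and then `{p, r}` is cut off.
-/

/-- A matching: a set of edges of `G` that pairwise share no endpoint. -/
def Matching {V : Type*} (G : SimpleGraph V) (M : Set (Sym2 V)) : Prop :=
  M ⊆ G.edgeSet ∧ ∀ e ∈ M, ∀ f ∈ M, e ≠ f → ∀ v : V, v ∈ e → v ∉ f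

/-- A maximal matching: no edge of `G` can be added while staying a matching. -/
def MaxMatching {V : Type*} (G : SimpleGraph V) (M : Set (Sym2 V)) : Prop :=
  Matching G M ∧ ∀ e ∈ G.edgeSet, e ∉ M → ¬Matching G (insert e M)

/-- `M` is `k`-robust: after deleting any set `F` of at most `k` edges of `G`
that keeps the graph connected, `M \ F` is a maximal matching of `G − F`. -/
def RobustMM {V : Type*} (G : SimpleGraph V) (k : ℕ) (M : Set (Sym2 V)) : Prop :=
  ∀ F : Finset (Sym2 V), ↑F ⊆ G.edgeSet → F.card ≤ k →
    (G.deleteEdges ↑F).Connected → MaxMatching (G.deleteEdges ↑F) (M \ ↑F)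

namespace RobustMatching

open SimpleGraph

variable {V : Type*} {G : SimpleGraph V} {M : Set (Sym2 V)}

/-! ### Matchings, vertex covers and exchange -/

/-- The vertex `v` is an endpoint of some edge of `M`. -/
def Cov (M : Set (Sym2 V)) (v : V) : Prop := ∃ t, s(v, t) ∈ M

/-- `uv` is an edge of `G` that is not a bridge, i.e. it lies on a cycle. -/
def Cyc (G : SimpleGraph V) (u v : V) : Prop :=
  G.Adj u v ∧ (G.deleteEdges {s(u, v)}).Reachable u v

theorem Cyc.symm {u v : V} (h : Cyc G u v) : Cyc G v u := by
  refine ⟨h.1.symm, ?_⟩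
  rw [Sym2.eq_swap]
  exact h.2.symm

theorem uniq (h : Matching G M) {a b c : V} (hb : s(a, b) ∈ M) (hc : s(a, c) ∈ M) : b = c := by
  by_contra hne
  exact h.2 _ hb _ hc (fun h => hne (Sym2.congr_right.1 h)) a (by simp) (by simp)

theorem uniq' (h : Matching G M) {a b c : V} (hb : s(b, a) ∈ M) (hc : s(c, a) ∈ M) : b = c :=
  uniq h (Sym2.eq_swap ▸ hb) (Sym2.eq_swap ▸ hc)

theorem adj_of_mem (h : Matching G M) {a b : V} (hb : s(a, b) ∈ M) : G.Adj a b := h.1 hb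

/-- Maximality means that the covered vertices form a vertex cover. -/
theorem maxMatching_iff :
    MaxMatching G M ↔ Matching G M ∧ ∀ u v, G.Adj u v → Cov M u ∨ Cov M v := by
  constructor
  · rintro ⟨h, hmax⟩
    refine ⟨h, fun u v huv => ?_⟩
    by_contra! hc
    have hno : ∀ e ∈ M, u ∉ e ∧ v ∉ e := by
      intro e he
      refine ⟨fun hu => hc.1 ?_, fun hv => hc.2 ?_⟩
      · obtain ⟨t, rfl⟩ := hu
        exact ⟨t, he⟩
      · obtain ⟨t, rfl⟩ := hv
        exact ⟨t, he⟩
    refine hmax s(u, v) huv (fun hm => hc.1 ⟨v, hm⟩) ⟨Set.insert_subset huv h.1, ?_⟩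
    rintro e (rfl | he) f (rfl | hf) hne w hw hw'
    · exact hne rfl
    · rcases Sym2.mem_iff.1 hw with rfl | rfl
      · exact (hno f hf).1 hw'
      · exact (hno f hf).2 hw'
    · rcases Sym2.mem_iff.1 hw' with rfl | rfl
      · exact (hno e he).1 hw
      · exact (hno e he).2 hw
    · exact h.2 e he f hf hne w hw hw'
  · rintro ⟨h, hcov⟩
    refine ⟨h, fun e he heM hins => ?_⟩
    induction e with
    | _ u v =>
      rcases hcov u v he with ⟨t, ht⟩ | ⟨t, ht⟩
      · exact heM (uniq hins (Or.inl rfl) (Or.inr ht) ▸ ht)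
      · have h1 : s(v, u) ∈ insert s(u, v) M := Or.inl Sym2.eq_swap
        have h2 := uniq hins h1 (Or.inr ht)
        subst h2
        exact heM (Sym2.eq_swap ▸ ht)

theorem exists_maxMatching [Fintype V] (h : Matching G M) : ∃ N, MaxMatching G N ∧ M ⊆ N := by
  obtain ⟨N, hMN, hN⟩ := (Set.toFinite {N | Matching G N}).exists_le_maximal h
  refine ⟨N, ⟨hN.prop, fun e _ heN hins => heN ?_⟩, hMN⟩
  exact hN.le_of_ge hins (Set.subset_insert e N) (Set.mem_insert e N)

/-- Exchange step: some maximal matching contains `ab` and all edges of `M` disjoint from it. -/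
theorem exists_swap [Fintype V] (h : Matching G M) {a b : V} (hab : G.Adj a b) :
    ∃ N, MaxMatching G N ∧ s(a, b) ∈ N ∧
      ∀ t r, s(t, r) ∈ M → t ≠ a → t ≠ b → r ≠ a → r ≠ b → s(t, r) ∈ N := by
  have hN : Matching G (insert s(a, b) {e ∈ M | a ∉ e ∧ b ∉ e}) := by
    refine ⟨Set.insert_subset hab fun e he => h.1 he.1, ?_⟩
    rintro e (rfl | he) f (rfl | hf) hne w hw hw'
    · exact hne rfl
    · rcases Sym2.mem_iff.1 hw with rfl | rfl
      · exact hf.2.1 hw'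
      · exact hf.2.2 hw'
    · rcases Sym2.mem_iff.1 hw' with rfl | rfl
      · exact he.2.1 hw
      · exact he.2.2 hw
    · exact h.2 e he.1 f hf.1 hne w hw hw'
  obtain ⟨N, hmax, hsub⟩ := exists_maxMatching hN
  refine ⟨N, hmax, hsub (Or.inl rfl), fun t r hm h1 h2 h3 h4 => hsub (Or.inr ⟨hm, ?_, ?_⟩)⟩
  · simp [h1.symm, h3.symm]
  · simp [h2.symm, h4.symm]

theorem exists_maxMatching_edge [Fintype V] {a b : V} (hab : G.Adj a b) :
    ∃ N, MaxMatching G N ∧ s(a, b) ∈ N := by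
  obtain ⟨N, h1, h2, -⟩ := exists_swap (G := G) (M := ∅) ⟨by simp, by simp⟩ hab
  exact ⟨N, h1, h2⟩

theorem exists_maxMatching_pair [Fintype V] {a b c d : V} (hab : G.Adj a b) (hcd : G.Adj c d)
    (h1 : a ≠ c) (h2 : a ≠ d) (h3 : b ≠ c) (h4 : b ≠ d) :
    ∃ N, MaxMatching G N ∧ s(a, b) ∈ N ∧ s(c, d) ∈ N := by
  obtain ⟨M, hM, hm⟩ := exists_maxMatching_edge hab
  obtain ⟨N, hN, hn, hk⟩ := exists_swap hM.1 hcd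
  exact ⟨N, hN, hk _ _ hm h1 h2 h3 h4, hn⟩

/-! ### Connectedness and cyclic edges -/

theorem mem_of_closed (hG : G.Connected) {S : Set V} (hS : ∀ a b, G.Adj a b → a ∈ S → b ∈ S)
    {a : V} (ha : a ∈ S) (b : V) : b ∈ S := by
  obtain ⟨p⟩ := hG.preconnected a b
  induction p with
  | nil => exact ha
  | cons h _ ih => exact ih (hS _ _ h ha)

theorem connected_delete {H : SimpleGraph V} (hH : H.Connected) {u v : V}
    (h : (H.deleteEdges {s(u, v)}).Reachable u v) : (H.deleteEdges {s(u, v)}).Connected := by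
  have : Nonempty V := ⟨u⟩
  refine ⟨fun a b => ?_⟩
  obtain ⟨p⟩ := hH.preconnected a b
  induction p with
  | nil => exact Reachable.refl _
  | @cons x y z hxy _ ih =>
    refine Reachable.trans ?_ ih
    by_cases he : s(x, y) = s(u, v)
    · rcases Sym2.eq_iff.1 he with ⟨rfl, rfl⟩ | ⟨rfl, rfl⟩
      · exact h
      · exact h.symm
    · exact Adj.reachable (by simp [deleteEdges_adj, hxy, he])

theorem Cyc.of_triangle {a b c : V} (hab : G.Adj a b) (hbc : G.Adj b c) (hca : G.Adj c a) :
    Cyc G a b := by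
  have h1 : (G.deleteEdges {s(a, b)}).Adj a c := by
    rw [deleteEdges_adj]
    exact ⟨hca.symm, by simp [hbc.ne', hab.ne]⟩
  have h2 : (G.deleteEdges {s(a, b)}).Adj c b := by
    rw [deleteEdges_adj]
    exact ⟨hbc.symm, by simp [hca.ne, hbc.ne']⟩
  exact ⟨hab, h1.reachable.trans h2.reachable⟩

theorem Cyc.of_square {a b c d : V} (hab : G.Adj a b) (hbc : G.Adj b c) (hcd : G.Adj c d)
    (hda : G.Adj d a) (hac : a ≠ c) (hbd : b ≠ d) : Cyc G a b := by
  have h1 : (G.deleteEdges {s(a, b)}).Adj a d := by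
    rw [deleteEdges_adj]
    exact ⟨hda.symm, by simp [hbd.symm, hab.ne]⟩
  have h2 : (G.deleteEdges {s(a, b)}).Adj d c := by
    rw [deleteEdges_adj]
    exact ⟨hcd.symm, by simp [hda.ne, hbd.symm]⟩
  have h3 : (G.deleteEdges {s(a, b)}).Adj c b := by
    rw [deleteEdges_adj]
    exact ⟨hbc.symm, by simp [hac.symm, hbc.ne']⟩
  exact ⟨hab, (h1.reachable.trans h2.reachable).trans h3.reachable⟩

/-- A vertex of a cycle has two edges on that cycle. -/
theorem Cyc.exists_other {u v : V} (h : Cyc G u v) : ∃ c, c ≠ v ∧ Cyc G u c := by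
  obtain ⟨p, hp⟩ := h.2.exists_isPath
  cases p with
  | nil => exact absurd rfl h.1.ne
  | @cons _ c _ huc q =>
    rw [Walk.cons_isPath_iff] at hp
    rw [deleteEdges_adj] at huc
    have hcv : c ≠ v := by
      rintro rfl
      exact huc.2 rfl
    have hr : (G.deleteEdges {s(u, c)}).Reachable c v := by
      refine ⟨q.transfer _ fun e he => ?_⟩
      have h1 := q.edges_subset_edgeSet he
      rw [edgeSet_deleteEdges] at h1 ⊢
      refine ⟨h1.1, ?_⟩
      rintro rfl
      exact hp.2 (q.fst_mem_support_of_mem_edges he)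
    refine ⟨c, hcv, huc.1, Reachable.trans (Adj.reachable ?_) hr.symm⟩
    rw [deleteEdges_adj]
    exact ⟨h.1, by simp [hcv.symm, h.1.ne']⟩

/-! ### Robustness forces a tree or a 4-cycle -/

section Forward

variable {k : ℕ}

/-- A cyclic edge of a maximal matching has all neighbours of its endpoints covered, since
deleting it leaves those neighbours as the only possible covers of the edges at `u`. -/
theorem cov_of_cyc (hG : G.Connected) (hk : 2 ≤ k)
    (hR : ∀ M : Set (Sym2 V), MaxMatching G M → RobustMM G k M) (hM : MaxMatching G M) {u v w : V}
    (huv : s(u, v) ∈ M) (hc : Cyc G u v) (huw : G.Adj u w) : Cov M w := by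
  by_cases hwv : w = v
  · subst hwv
    exact ⟨u, Sym2.eq_swap ▸ huv⟩
  have h := hR M hM {s(u, v)} (by simpa using hc.1) (by simp; lia)
    (by simpa using connected_delete hG hc.2)
  rcases (maxMatching_iff.1 h).2 u w (by
    rw [deleteEdges_adj]
    exact ⟨huw, by simp [hwv, hc.1.ne]⟩) with ⟨t, ht⟩ | ⟨t, ht⟩
  · have := uniq hM.1 huv ht.1
    subst this
    simp at ht
  · exact ⟨t, ht.1⟩

theorem cov_of_cyc_vertex [Fintype V] (hG : G.Connected) (hk : 2 ≤ k)
    (hR : ∀ M : Set (Sym2 V), MaxMatching G M → RobustMM G k M) (hM : MaxMatching G M) {w x : V}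
    (hwx : Cyc G w x) : Cov M w := by
  by_contra hw
  obtain ⟨c, hcw, hxc⟩ := hwx.symm.exists_other
  -- Put the cyclic edge `xc` into the matching: then `w` must become covered, by some edge `wt`.
  obtain ⟨N, hN, hxcN, hkeep⟩ := exists_swap hM.1 hxc.1
  obtain ⟨t, ht⟩ := cov_of_cyc hG hk hR hN hxcN hxc hwx.1.symm
  have hwt := adj_of_mem hN.1 ht
  have htx : t ≠ x := by
    rintro rfl
    exact hcw (uniq hN.1 hxcN (Sym2.eq_swap ▸ ht))
  have htc : t ≠ c := by
    rintro rfl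
    exact hwx.1.ne (uniq' hN.1 ht hxcN)
  obtain ⟨r, hr⟩ : Cov M t := ((maxMatching_iff.1 hM).2 w t hwt).resolve_left hw
  have htr := adj_of_mem hM.1 hr
  by_cases hrx : r = x
  · subst hrx
    exact hw (cov_of_cyc hG hk hR hM hr (.of_triangle htr hwx.1.symm hwt) hwt.symm)
  by_cases hrc : r = c
  · subst hrc
    exact hw (cov_of_cyc hG hk hR hM hr
      (.of_square htr hxc.1.symm hwx.1.symm hwt htx hcw) hwt.symm)
  · have h1 := hkeep t r hr htx htc hrx hrc
    have h2 := uniq hN.1 (Sym2.eq_swap ▸ ht) h1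
    subst h2
    exact hw ⟨t, Sym2.eq_swap ▸ hr⟩

/-- Bridges and cyclic edges do not meet. -/
theorem cyc_of_cyc [Fintype V] (hG : G.Connected) (hk : 2 ≤ k)
    (hR : ∀ M : Set (Sym2 V), MaxMatching G M → RobustMM G k M) {u v p : V}
    (huv : Cyc G u v) (hup : G.Adj u p) : Cyc G u p := by
  by_contra hb
  have hpv : p ≠ v := by
    rintro rfl
    exact hb huv
  obtain ⟨c, hcu, hvc⟩ := huv.symm.exists_other
  have hpc : p ≠ c := by
    rintro rfl
    exact hb (.of_triangle hup hvc.1.symm huv.1.symm)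
  obtain ⟨M, hM, hupM, hvcM⟩ := exists_maxMatching_pair hup hvc.1 huv.1.ne hcu.symm hpv hpc
  -- Replacing `up` and `vc` by `uv`, the vertex `c` must be covered anew, by some edge `ct`;
  -- `t` is also covered by `M`, and this is only consistent if `t = p`, making `u p c v` a 4-cycle.
  obtain ⟨N, hN, huvN, hkeep⟩ := exists_swap hM.1 huv.1
  obtain ⟨t, ht⟩ := cov_of_cyc hG hk hR hN (Sym2.eq_swap ▸ huvN) huv.symm hvc.1
  have hct := adj_of_mem hN.1 ht
  have htu : t ≠ u := by
    rintro rfl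
    exact hvc.1.ne (uniq hN.1 huvN (Sym2.eq_swap ▸ ht))
  have htv : t ≠ v := by
    rintro rfl
    exact hcu (uniq' hN.1 ht huvN)
  obtain ⟨r, hr⟩ := cov_of_cyc hG hk hR hM (Sym2.eq_swap ▸ hvcM) hvc.symm hct
  by_cases hru : r = u
  · subst hru
    have := uniq hM.1 hupM (Sym2.eq_swap ▸ hr)
    subst this
    exact hb (.of_square hup hct.symm hvc.1.symm huv.1.symm hcu.symm hpv)
  by_cases hrv : r = v
  · subst hrv
    exact hct.ne (uniq hM.1 hvcM (Sym2.eq_swap ▸ hr))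
  · have h1 := uniq hN.1 (Sym2.eq_swap ▸ ht) (hkeep t r hr htu htv hru hrv)
    subst h1
    exact htv (uniq' hM.1 hr hvcM)

/-- If every maximal matching is perfect, every path on four vertices closes to a 4-cycle. -/
theorem adj_of_path [Fintype V] (hcov : ∀ M : Set (Sym2 V), MaxMatching G M → ∀ v, Cov M v)
    {u v x y : V} (huv : G.Adj u v) (hvx : G.Adj v x) (hxy : G.Adj x y) (hux : u ≠ x)
    (huy : u ≠ y) (hvy : v ≠ y) : G.Adj u y := by
  obtain ⟨M, hM, huvM, hxyM⟩ := exists_maxMatching_pair huv hxy hux huy hvx.ne hvy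
  obtain ⟨N, hN, hvxN, hkeep⟩ := exists_swap hM.1 hvx
  obtain ⟨t, ht⟩ := hcov N hN u
  have hut := adj_of_mem hN.1 ht
  have htv : t ≠ v := by
    rintro rfl
    exact hux (uniq hN.1 (Sym2.eq_swap ▸ ht) hvxN)
  have htx : t ≠ x := by
    rintro rfl
    exact huv.ne (uniq' hN.1 ht hvxN)
  obtain ⟨r, hr⟩ := hcov M hM t
  by_cases hrv : r = v
  · subst hrv
    exact absurd (uniq' hM.1 huvM hr) hut.ne
  by_cases hrx : r = x
  · subst hrx
    exact uniq hM.1 (Sym2.eq_swap ▸ hr) hxyM ▸ hut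
  · have h1 := uniq hN.1 (Sym2.eq_swap ▸ ht) (hkeep t r hr htv htx hrv hrx)
    subst h1
    exact absurd (uniq hM.1 (Sym2.eq_swap ▸ hr) huvM) htv

/-- Two matched edges joined by an edge `vx` cannot be deleted together, as `vx` would then be
uncovered; so they form an edge cut. -/
theorem not_reachable_of_path [Fintype V] (hG : G.Connected) (hk : 2 ≤ k)
    (hR : ∀ M : Set (Sym2 V), MaxMatching G M → RobustMM G k M) {u v x y : V}
    (huv : Cyc G u v) (hvx : G.Adj v x) (hxy : G.Adj x y) (hux : u ≠ x)
    (huy : u ≠ y) (hvy : v ≠ y) :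
    ¬ (G.deleteEdges {s(u, v), s(x, y)}).Reachable x y := by
  classical
  intro hr
  obtain ⟨M, hM, huvM, hxyM⟩ := exists_maxMatching_pair huv.1 hxy hux huy hvx.ne hvy
  have hcon : (G.deleteEdges {s(u, v), s(x, y)}).Connected := by
    have h1 := connected_delete (connected_delete hG huv.2) (u := x) (v := y) (by
      rwa [deleteEdges_deleteEdges, Set.singleton_union])
    rwa [deleteEdges_deleteEdges, Set.singleton_union] at h1
  have h := hR M hM {s(u, v), s(x, y)}
    (by
      intro e he
      simp only [Finset.coe_insert, Finset.coe_singleton, Set.mem_insert_iff,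
        Set.mem_singleton_iff] at he
      rcases he with rfl | rfl
      · exact huv.1
      · exact hxy)
    (Finset.card_le_two.trans hk)
    (by simpa using hcon)
  rcases (maxMatching_iff.1 h).2 v x (by
    rw [deleteEdges_adj]
    refine ⟨hvx, ?_⟩
    simp [hvy, hux.symm, hvx.ne, huv.1.ne']) with ⟨t, ht⟩ | ⟨t, ht⟩
  · have := uniq hM.1 (Sym2.eq_swap ▸ huvM) ht.1
    subst this
    exact ht.2 (by simp [Sym2.eq_swap])
  · have := uniq hM.1 hxyM ht.1
    subst this
    exact ht.2 (by simp)

/-- The vertex `v` of a 4-cycle has no neighbour besides its two neighbours on the cycle. -/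
theorem neighbor_of_square [Fintype V] (hG : G.Connected) (hk : 2 ≤ k)
    (hR : ∀ M : Set (Sym2 V), MaxMatching G M → RobustMM G k M)
    (hcov : ∀ M : Set (Sym2 V), MaxMatching G M → ∀ v, Cov M v) {u v x y z : V}
    (huv : G.Adj u v) (hvx : G.Adj v x) (hxy : G.Adj x y) (hyu : G.Adj y u) (hux : u ≠ x)
    (hvy : v ≠ y) (hvz : G.Adj v z) : z = u ∨ z = x := by
  by_contra! hz
  refine not_reachable_of_path hG hk hR (.of_square huv hvx hxy hyu hux hvy) hvx hxy hux
    hyu.ne' hvy ?_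
  have h1 : (G.deleteEdges {s(u, v), s(x, y)}).Adj x v := by
    rw [deleteEdges_adj]
    exact ⟨hvx.symm, by simp [hvy, hux.symm, hxy.ne, hvx.ne']⟩
  by_cases hzy : z = y
  · subst hzy
    have h2 : (G.deleteEdges {s(u, v), s(x, z)}).Adj v z := by
      rw [deleteEdges_adj]
      exact ⟨hvz, by simp [huv.ne', hvx.ne, hz.1, hvz.ne]⟩
    exact h1.reachable.trans h2.reachable
  · have hzyA : G.Adj z y := adj_of_path hcov hvz.symm huv.symm hyu.symm hz.1 hzy hvy
    have h2 : (G.deleteEdges {s(u, v), s(x, y)}).Adj v z := by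
      rw [deleteEdges_adj]
      exact ⟨hvz, by simp [huv.ne', hvx.ne, hz.1, hvy]⟩
    have h3 : (G.deleteEdges {s(u, v), s(x, y)}).Adj z y := by
      rw [deleteEdges_adj]
      exact ⟨hzyA, by simp [hz.1, hz.2, hvz.ne', hzy]⟩
    exact (h1.reachable.trans h2.reachable).trans h3.reachable

theorem iso_of_square {u v x y : V} (huv : G.Adj u v) (hvx : G.Adj v x) (hxy : G.Adj x y)
    (hyu : G.Adj y u) (hux : ¬ G.Adj u x) (hvy : ¬ G.Adj v y) (nux : u ≠ x) (nvy : v ≠ y)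
    (hall : ∀ a, a = u ∨ a = v ∨ a = x ∨ a = y) : Nonempty (G ≃g cycleGraph 4) := by
  have hbij : Function.Bijective ![u, v, x, y] := by
    constructor
    · intro i j hij
      fin_cases i <;> fin_cases j <;>
        simp_all [huv.ne, huv.ne', hvx.ne, hvx.ne', hxy.ne, hxy.ne', hyu.ne, hyu.ne', nux.symm,
          nvy.symm]
    · intro a
      rcases hall a with rfl | rfl | rfl | rfl
      exacts [⟨0, rfl⟩, ⟨1, rfl⟩, ⟨2, rfl⟩, ⟨3, rfl⟩]
  have hadj : ∀ i j : Fin 4,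
      G.Adj (![u, v, x, y] i) (![u, v, x, y] j) ↔ (cycleGraph 4).Adj i j := by
    have hxu : ¬ G.Adj x u := fun h => hux h.symm
    have hyv : ¬ G.Adj y v := fun h => hvy h.symm
    intro i j
    fin_cases i <;> fin_cases j <;>
      simp [huv, huv.symm, hvx, hvx.symm, hxy, hxy.symm, hyu, hyu.symm, hux, hvy, hxu, hyv,
        cycleGraph_adj] <;> decide
  exact ⟨(RelIso.mk (Equiv.ofBijective _ hbij) (fun {i j} => hadj i j) :
    cycleGraph 4 ≃g G).symm⟩

theorem iso_of_robust [Fintype V] (hG : G.Connected) (hk : 2 ≤ k)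
    (hR : ∀ M : Set (Sym2 V), MaxMatching G M → RobustMM G k M) (hT : ¬ G.IsTree) :
    Nonempty (G ≃g cycleGraph 4) := by
  obtain ⟨u, v, huv⟩ : ∃ u v, Cyc G u v := by
    by_contra! hno
    refine hT ⟨hG, isAcyclic_iff_forall_adj_isBridge.2 fun u v huv => ?_⟩
    rw [isBridge_iff]
    exact fun hr => hno u v ⟨huv, hr⟩
  have hcyc : ∀ a, ∃ b, Cyc G a b := by
    refine mem_of_closed (S := {a | ∃ b, Cyc G a b}) hG ?_ ⟨v, huv⟩
    rintro a b hab ⟨c, hc⟩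
    exact ⟨a, (cyc_of_cyc hG hk hR hc hab).symm⟩
  have hcov : ∀ M : Set (Sym2 V), MaxMatching G M → ∀ v, Cov M v := fun M hM a =>
    (hcyc a).elim fun _ hb => cov_of_cyc_vertex hG hk hR hM hb
  obtain ⟨x, hxu, hvx⟩ := huv.symm.exists_other
  -- The fourth vertex comes from a perfect matching, which also rules out `G` being a triangle.
  obtain ⟨M, hM, huvM⟩ := exists_maxMatching_edge huv.1
  obtain ⟨y, hy⟩ := hcov M hM x
  have hxy := adj_of_mem hM.1 hy
  have huy : u ≠ y := by
    rintro rfl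
    exact hvx.1.ne (uniq hM.1 huvM (Sym2.eq_swap ▸ hy))
  have hvy : v ≠ y := by
    rintro rfl
    exact hxu (uniq' hM.1 hy huvM)
  have hyu := (adj_of_path hcov huv.1 hvx.1 hxy hxu.symm huy hvy).symm
  have nv : ∀ z, G.Adj v z → z = u ∨ z = x := fun z =>
    neighbor_of_square hG hk hR hcov huv.1 hvx.1 hxy hyu hxu.symm hvy
  have nx : ∀ z, G.Adj x z → z = v ∨ z = y := fun z =>
    neighbor_of_square hG hk hR hcov hvx.1 hxy hyu huv.1 hvy hxu
  have ny : ∀ z, G.Adj y z → z = x ∨ z = u := fun z =>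
    neighbor_of_square hG hk hR hcov hxy hyu huv.1 hvx.1 hxu hvy.symm
  have nu : ∀ z, G.Adj u z → z = y ∨ z = v := fun z =>
    neighbor_of_square hG hk hR hcov hyu huv.1 hvx.1 hxy hvy.symm hxu.symm
  refine iso_of_square huv.1 hvx.1 hxy hyu (fun h => ?_) (fun h => ?_) hxu.symm hvy ?_
  · rcases nu _ h with h | h
    exacts [hxy.ne h, hvx.1.ne' h]
  · rcases nv _ h with h | h
    exacts [hyu.ne h, hxy.ne' h]
  · refine mem_of_closed (S := {a | a = u ∨ a = v ∨ a = x ∨ a = y}) hG ?_ (Or.inl rfl)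
    rintro a b hab (rfl | rfl | rfl | rfl)
    · rcases nu _ hab with h | h <;> simp [h]
    · rcases nv _ hab with h | h <;> simp [h]
    · rcases nx _ hab with h | h <;> simp [h]
    · rcases ny _ hab with h | h <;> simp [h]

end Forward

/-! ### Trees and the 4-cycle are robust -/

theorem matching_delete (h : Matching G M) (F : Set (Sym2 V)) :
    Matching (G.deleteEdges F) (M \ F) := by
  refine ⟨fun e he => ?_, fun e he f hf => h.2 e he.1 f hf.1⟩
  rw [edgeSet_deleteEdges]
  exact ⟨h.1 he.1, he.2⟩

theorem robust_of_isTree (hT : G.IsTree) (hM : MaxMatching G M) (k : ℕ) : RobustMM G k M := by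
  intro F hF _ hcon
  have hF0 : F = ∅ := by
    refine Finset.eq_empty_of_forall_notMem fun e he => ?_
    induction e with
    | _ u v =>
      have hb := isAcyclic_iff_forall_adj_isBridge.1 hT.isAcyclic (hF he)
      rw [isBridge_iff] at hb
      refine hb ((hcon.preconnected u v).mono (deleteEdges_anti ?_))
      simpa using he
  subst hF0
  simpa using hM

/-- Two edges `pq`, `pr` of the 4-cycle are completed by a vertex `s` to `p q s r`. -/
theorem cycle_four_aux : ∀ p q r : Fin 4, (cycleGraph 4).Adj p q → (cycleGraph 4).Adj p r →
    q ≠ r → ∃ s, (cycleGraph 4).Adj r s ∧ (∀ t, (cycleGraph 4).Adj p t → t = q ∨ t = r) ∧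
      (∀ t, (cycleGraph 4).Adj r t → t = p ∨ t = s) ∧
      (∀ t, (cycleGraph 4).Adj s t → t = q ∨ t = r) ∧ s ≠ p := by
  simp only [cycleGraph_adj (n := 2)]
  decide

theorem square_of_iso (φ : G ≃g cycleGraph 4) {p q r : V} (hpq : G.Adj p q) (hpr : G.Adj p r)
    (hqr : q ≠ r) : ∃ s, G.Adj r s ∧ (∀ t, G.Adj p t → t = q ∨ t = r) ∧
      (∀ t, G.Adj r t → t = p ∨ t = s) ∧ (∀ t, G.Adj s t → t = q ∨ t = r) ∧ s ≠ p := by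
  obtain ⟨s, h1, h2, h3, h4, h5⟩ := cycle_four_aux (φ p) (φ q) (φ r) (φ.map_adj_iff.2 hpq)
    (φ.map_adj_iff.2 hpr) (φ.injective.ne hqr)
  obtain ⟨s, rfl⟩ := φ.surjective s
  refine ⟨s, φ.map_adj_iff.1 h1, fun t ht => ?_, fun t ht => ?_, fun t ht => ?_,
    fun h => h5 (h ▸ rfl)⟩
  · simpa using h2 (φ t) (φ.map_adj_iff.2 ht)
  · simpa using h3 (φ t) (φ.map_adj_iff.2 ht)
  · simpa using h4 (φ t) (φ.map_adj_iff.2 ht)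

theorem robust_of_iso (φ : G ≃g cycleGraph 4) (hM : MaxMatching G M) (k : ℕ) :
    RobustMM G k M := by
  intro F _ _ hcon
  refine maxMatching_iff.2 ⟨matching_delete hM.1 _, ?_⟩
  have key : ∀ p r, (G.deleteEdges ↑F).Adj p r → Cov M p →
      Cov (M \ ↑F) p ∨ Cov (M \ ↑F) r := by
    rintro p r hpr ⟨q, hq⟩
    rw [deleteEdges_adj] at hpr
    by_cases hqF : s(p, q) ∈ (F : Set (Sym2 V))
    swap
    · exact Or.inl ⟨q, hq, hqF⟩
    have hqr : q ≠ r := by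
      rintro rfl
      exact hpr.2 hqF
    obtain ⟨s, hrs, np, nr, ns, hsp⟩ := square_of_iso φ (adj_of_mem hM.1 hq) hpr.1 hqr
    -- The edge `rs` opposite to `pq` is matched, as `r` and `s` have no other free neighbour.
    have hrsM : s(r, s) ∈ M := by
      rcases (maxMatching_iff.1 hM).2 r s hrs with ⟨t, ht⟩ | ⟨t, ht⟩
      · rcases nr t (adj_of_mem hM.1 ht) with rfl | rfl
        · exact absurd (uniq hM.1 hq (Sym2.eq_swap ▸ ht)) hqr
        · exact ht
      · rcases ns t (adj_of_mem hM.1 ht) with rfl | rfl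
        · exact absurd (uniq' hM.1 ht hq) hsp
        · exact Sym2.eq_swap ▸ ht
    by_cases hrsF : s(r, s) ∈ (F : Set (Sym2 V))
    swap
    · exact Or.inr ⟨s, hrsM, hrsF⟩
    exfalso
    have hmem := mem_of_closed (S := {a | a = p ∨ a = r}) hcon (by
      rintro a b hab (rfl | rfl)
      · rw [deleteEdges_adj] at hab
        rcases np b hab.1 with rfl | rfl
        · exact absurd hqF hab.2
        · exact Or.inr rfl
      · rw [deleteEdges_adj] at hab
        rcases nr b hab.1 with rfl | rfl
        · exact Or.inl rfl
        · exact absurd hrsF hab.2) (Or.inl rfl) q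
    rcases hmem with h | h
    · exact (adj_of_mem hM.1 hq).ne' h
    · exact hqr h
  intro p r hpr
  rcases (maxMatching_iff.1 hM).2 p r (deleteEdges_le _ hpr) with h | h
  · exact key p r hpr h
  · exact (key r p hpr.symm h).symm

end RobustMatching

/-- For every `k ≥ 2`, a finite connected graph has every maximal matching
`k`-robust iff it is a tree or the cycle on four vertices. -/
theorem every_MM_k_robust_iff {V : Type*} [Fintype V]
    (G : SimpleGraph V) (hG : G.Connected) (k : ℕ) (hk : 2 ≤ k) :
    (∀ M : Set (Sym2 V), MaxMatching G M → RobustMM G k M) ↔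
      (G.IsTree ∨ Nonempty (G ≃g SimpleGraph.cycleGraph 4)) := by
  constructor
  · intro hR
    by_cases hT : G.IsTree
    · exact Or.inl hT
    · exact Or.inr (RobustMatching.iso_of_robust hG hk hR hT)
  · rintro (hT | ⟨⟨φ⟩⟩) M hM
    · exact RobustMatching.robust_of_isTree hT hM k
    · exact RobustMatching.robust_of_iso φ hM k
end

section
/- Let M be a 1-robust maximal matching of a finite connected simple graph G. If a vertex u is not an endpoint of any edge of M, then every neighbor v of u is an endpoint of some edge e of M, and this edge e is a bridge of G. -/
theorem MaxMatching.exists_mem_of_adj {V : Type*} {G : SimpleGraph V} {M : Set (Sym2 V)}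
    (hM : MaxMatching G M) {u v : V} (hu : ∀ e ∈ M, u ∉ e) (huv : G.Adj u v) :
    ∃ e ∈ M, v ∈ e := by
  by_contra! h
  refine hM.2 s(u, v) huv (fun hm => hu _ hm (Sym2.mem_mk_left u v)) ⟨?_, ?_⟩
  · exact Set.insert_subset huv hM.1.1
  · have key : ∀ f ∈ M, ∀ w ∈ s(u, v), w ∉ f := by
      intro f hf w hw
      rcases Sym2.mem_iff.1 hw with rfl | rfl
      · exact hu f hf
      · exact h f hf
    rintro e (rfl | he) f (rfl | hf) hef w hwe hwf
    · exact hef rfl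
    · exact key f hf w hwe hwf
    · exact key e he w hwf hwe
    · exact hM.1.2 e he f hf hef w hwe hwf

/-- In a 1-robust maximal matching of a finite connected graph, every neighbor
`v` of an unmatched vertex `u` is matched, and its matched edge is a bridge. -/
theorem unmatched_neighbor_matched_by_bridge {V : Type*} [Fintype V]
    (G : SimpleGraph V) (hG : G.Connected) (M : Set (Sym2 V))
    (hM : MaxMatching G M) (hrob : RobustMM G 1 M)
    (u : V) (hu : ∀ e ∈ M, u ∉ e) (v : V) (huv : G.Adj u v) :
    ∃ e ∈ M, v ∈ e ∧ e ∈ G.edgeSet ∧ ¬(G.deleteEdges {e}).Connected := by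
  obtain ⟨e, he, hve⟩ := hM.exists_mem_of_adj hu huv
  refine ⟨e, he, hve, hM.1.1 he, fun hconn => ?_⟩
  have hmax : MaxMatching (G.deleteEdges {e}) (M \ {e}) := by
    simpa using hrob {e} (by simpa using hM.1.1 he) (by simp) (by simpa using hconn)
  have hadj : (G.deleteEdges {e}).Adj u v := by
    rw [SimpleGraph.deleteEdges_adj]
    refine ⟨huv, fun h => hu e he ?_⟩
    rw [← Set.mem_singleton_iff.1 h]
    exact Sym2.mem_mk_left u v
  obtain ⟨f, hf, hvf⟩ := hmax.exists_mem_of_adj (fun f hf => hu f hf.1) hadj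
  exact hM.1.2 f hf.1 e he hf.2 v hvf hve
end

section
/- Let M be a 1-robust maximal matching of a finite connected simple graph G. If a vertex u is not an endpoint of any edge of M, and a, b are two neighbors of u that are adjacent to each other, then the edge {a,b} does not belong to M. -/
/-- In a 1-robust maximal matching of a finite connected graph, if `u` is
unmatched and `a`, `b` are neighbors of `u` that are adjacent, then the edge
`{a,b}` is not in the matching. -/
theorem triangle_edge_not_matched {V : Type*} [Fintype V]
    (G : SimpleGraph V) (hG : G.Connected) (M : Set (Sym2 V))
    (hM : MaxMatching G M) (hrob : RobustMM G 1 M)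
    (u a b : V) (hu : ∀ e ∈ M, u ∉ e)
    (hua : G.Adj u a) (hub : G.Adj u b) (hab : G.Adj a b) :
    s(a, b) ∉ M := by
  intro habM
  -- The path `a - u - b` survives the deletion of `ab`, so `ab` is not a bridge.
  have hadj_ua : (G.deleteEdges {s(a, b)}).Adj u a := by
    simp [SimpleGraph.deleteEdges_adj, hua, hua.ne, hub.ne]
  have hadj_ub : (G.deleteEdges {s(a, b)}).Adj u b := by
    simp [SimpleGraph.deleteEdges_adj, hub, hua.ne, hub.ne]
  have hconn : (G.deleteEdges {s(a, b)}).Connected :=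
    hG.connected_delete_edge_of_not_isBridge fun h =>
      SimpleGraph.isBridge_iff.1 h (hadj_ua.symm.reachable.trans hadj_ub.reachable)
  have hmax : MaxMatching (G.deleteEdges {s(a, b)}) (M \ {s(a, b)}) := by
    simpa using hrob {s(a, b)} (by simpa using hab) (by simp) (by simpa using hconn)
  -- Both `u` and `a` are now unmatched, since `ab` was the only edge of `M` at `a`;
  -- hence `ua` can be added, contradicting maximality.
  have hfree : ∀ f ∈ M \ {s(a, b)}, ∀ v ∈ s(u, a), v ∉ f := by
    rintro f ⟨hfM, hfab⟩ v hv
    rcases Sym2.mem_iff.1 hv with rfl | rfl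
    · exact hu f hfM
    · exact hM.1.2 _ habM f hfM (fun h => hfab h.symm) v (Sym2.mem_mk_left v b)
  refine hmax.2 s(u, a) hadj_ua (fun h => hu _ h.1 (Sym2.mem_mk_left u a)) ⟨?_, ?_⟩
  · exact Set.insert_subset hadj_ua hmax.1.1
  · rintro e (rfl | he) f (rfl | hf) hne v hve hvf
    · exact hne rfl
    · exact hfree f hf v hve hvf
    · exact hfree e he v hvf hve
    · exact hmax.1.2 e he f hf hne v hve hvf
end

section
/- Let G be a finite connected simple graph in which every maximal matching is 1-robust. Then G is either a tree or 2-edge-connected (i.e., G has no bridge). -/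
open SimpleGraph

theorem exists_maxMatching {V : Type*} [Fintype V] {G : SimpleGraph V} {M : Set (Sym2 V)}
    (hM : Matching G M) : ∃ N, M ⊆ N ∧ MaxMatching G N := by
  obtain ⟨N, hMN, hN⟩ := Finite.exists_le_maximal (p := Matching G) hM
  refine ⟨N, hMN, hN.prop, fun e _ heN hins ↦ heN ?_⟩
  exact hN.le_of_ge hins (Set.subset_insert e N) (Set.mem_insert e N)

theorem MaxMatching.exists_of_adj {V : Type*} {G : SimpleGraph V} {M : Set (Sym2 V)}
    (hM : MaxMatching G M) {x y : V} (hxy : G.Adj x y) :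
    ∃ f ∈ M, x ∈ f ∨ y ∈ f := by
  by_contra! hno
  have hnot : s(x, y) ∉ M := fun hm ↦ (hno _ hm).1 (Sym2.mem_mk_left x y)
  refine hM.2 s(x, y) hxy hnot ⟨Set.insert_subset hxy hM.1.1, ?_⟩
  rintro e (rfl | he) f (rfl | hf) hef v hve hvf
  · exact hef rfl
  · rcases Sym2.mem_iff.1 hve with rfl | rfl
    · exact (hno f hf).1 hvf
    · exact (hno f hf).2 hvf
  · rcases Sym2.mem_iff.1 hvf with rfl | rfl
    · exact (hno e he).1 hve
    · exact (hno e he).2 hve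
  · exact hM.1.2 e he f hf hef v hve hvf

/-- Deleting the matching edge `cd` leaves `d` uncovered, so the edge `dx` of the remaining graph
must be blocked at `x`, by a matching edge other than `cd`. -/
theorem covered_of_robust {V : Type*} {G : SimpleGraph V} {M : Set (Sym2 V)}
    (hM : MaxMatching G M) (hr : RobustMM G 1 M) {c d x : V} (hcd : s(c, d) ∈ M)
    (hconn : (G.deleteEdges {s(c, d)}).Connected) (hdx : G.Adj d x) (hxc : x ≠ c) :
    ∃ f ∈ M, f ≠ s(c, d) ∧ x ∈ f := by
  have hmax := hr {s(c, d)} (by simpa using hM.1.1 hcd) (by simp) (by simpa using hconn)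
  obtain ⟨f, ⟨hfM, hne⟩, hf⟩ := hmax.exists_of_adj (x := d) (y := x) (by
    rw [deleteEdges_adj]
    refine ⟨hdx, ?_⟩
    have := hdx.ne
    simp
    grind)
  have hne : f ≠ s(c, d) := by simpa using hne
  rcases hf with hf | hf
  · exact absurd (Sym2.mem_mk_right c d) (hM.1.2 f hfM _ hcd hne d hf)
  · exact ⟨f, hfM, hne, hf⟩

/-- A non-bridge `ac` lies on a cycle; `cd` is the next edge of that cycle. -/
theorem exists_next_nonbridge {V : Type*} {G : SimpleGraph V} {a c : V} (hac : G.Adj a c)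
    (hnb : ¬ G.IsBridge s(a, c)) :
    ∃ d, d ≠ a ∧ G.Adj c d ∧ ¬ G.IsBridge s(c, d) := by
  rw [isBridge_iff, not_not] at hnb
  obtain ⟨p, hp⟩ := hnb.symm.exists_isPath
  cases p with
  | nil => exact absurd rfl hac.ne
  | @cons _ d _ hcd q =>
    rw [Walk.cons_isPath_iff] at hp
    obtain ⟨hcd', hne⟩ := (deleteEdges_adj).1 hcd
    have hda : d ≠ a := by
      rintro rfl
      exact hne (by simp [Sym2.eq_swap])
    refine ⟨d, hda, hcd', ?_⟩
    rw [isBridge_iff, not_not]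
    have h1 : (G.deleteEdges {s(c, d)}).Adj c a := by
      rw [deleteEdges_adj]
      refine ⟨hac.symm, ?_⟩
      have := hcd'.ne
      simp
      grind
    have hle : G.deleteEdges {s(a, c)} ≤ G := deleteEdges_le _
    have h2 : (G.deleteEdges {s(c, d)}).Reachable d a := by
      refine ⟨(q.mapLe hle).toDeleteEdge s(c, d) fun hm ↦ hp.2 ?_⟩
      have := (q.mapLe hle).fst_mem_support_of_mem_edges hm
      simpa using this
    exact h1.reachable.trans h2.symm

/-- In a connected graph with a bridge and a non-bridge, some vertex is on one of each: otherwise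
being on a non-bridge would propagate along every edge. -/
theorem exists_mixed {V : Type*} {G : SimpleGraph V} (hG : G.Connected)
    {e f : Sym2 V} (he : e ∈ G.edgeSet) (hbe : G.IsBridge e)
    (hf : f ∈ G.edgeSet) (hbf : ¬ G.IsBridge f) :
    ∃ a b c, G.Adj a b ∧ G.IsBridge s(a, b) ∧ G.Adj a c ∧ ¬ G.IsBridge s(a, c) := by
  by_contra! hno
  have prop : ∀ {u v : V}, G.Walk u v → (∃ c, G.Adj u c ∧ ¬ G.IsBridge s(u, c)) →
      ∃ c, G.Adj v c ∧ ¬ G.IsBridge s(v, c) := by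
    intro u v p
    induction p with
    | nil => exact id
    | @cons u w _ huw q ih =>
      rintro ⟨c, huc, hc⟩
      refine ih ⟨u, huw.symm, ?_⟩
      rw [Sym2.eq_swap]
      exact fun hb ↦ hc (hno u w c huw hb huc)
  induction e with | _ u v
  induction f with | _ x y
  obtain ⟨p⟩ := hG.preconnected x u
  obtain ⟨c, huc, hc⟩ := prop p ⟨y, hf, hbf⟩
  exact hc (hno u v c he hbe huc)

theorem connected_of_not_isBridge {V : Type*} {G : SimpleGraph V} (hG : G.Connected)
    {e : Sym2 V} (hb : ¬ G.IsBridge e) : (G.deleteEdges {e}).Connected := by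
  induction e with | _ u v
  exact hG.connected_delete_edge_of_not_isBridge hb

/-- A finite connected graph in which every maximal matching is 1-robust is
either a tree or 2-edge-connected (has no bridge). -/
theorem tree_or_two_edge_connected {V : Type*} [Fintype V]
    (G : SimpleGraph V) (hG : G.Connected)
    (h : ∀ M : Set (Sym2 V), MaxMatching G M → RobustMM G 1 M) :
    G.IsTree ∨ ∀ e ∈ G.edgeSet, (G.deleteEdges {e}).Connected := by
  by_contra! ⟨htree, e, he, hdis⟩
  have hbe : G.IsBridge e := by
    by_contra hb
    exact hdis (connected_of_not_isBridge hG hb)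
  obtain ⟨f, hf, hbf⟩ : ∃ f ∈ G.edgeSet, ¬ G.IsBridge f := by
    by_contra! hno
    exact htree ⟨hG, isAcyclic_iff_forall_isBridge.2 fun e he ↦ hno e he⟩
  obtain ⟨a, b, c, hab, hbab, hac, hbac⟩ := exists_mixed hG he hbe hf hbf
  obtain ⟨d, hda, hcd, hbcd⟩ := exists_next_nonbridge hac hbac
  have hcb : c ≠ b := by
    rintro rfl
    exact hbac hbab
  -- A `b`–`d` link would close a walk `a, c, d, b` avoiding the bridge `ab`.
  have hnr : ¬ (G.deleteEdges {s(a, b)}).Reachable d b := by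
    intro hdb
    have h1 : (G.deleteEdges {s(a, b)}).Adj a c := by
      rw [deleteEdges_adj]
      refine ⟨hac, ?_⟩
      have := hab.ne
      simp
      grind
    have h2 : (G.deleteEdges {s(a, b)}).Adj c d := by
      rw [deleteEdges_adj]
      refine ⟨hcd, ?_⟩
      have := hac.ne
      simp
      grind
    exact isBridge_iff.1 hbab (h1.reachable.trans (h2.reachable.trans hdb))
  have hdb : d ≠ b := by
    rintro rfl
    exact hnr (Reachable.refl _)
  have hndb : ¬ G.Adj d b := by
    intro hadj
    refine hnr (Adj.reachable ?_)
    rw [deleteEdges_adj]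
    refine ⟨hadj, ?_⟩
    simp
    grind
  have hca := hac.ne
  have hcd_ne := hcd.ne
  have hab_ne := hab.ne
  have hmatch : Matching G {s(a, b), s(c, d)} := by
    refine ⟨?_, ?_⟩
    · rintro g (rfl | rfl)
      · exact hab
      · exact hcd
    · rintro g (rfl | rfl) k (rfl | rfl) hgk v hv hv'
      all_goals simp only [Sym2.mem_iff] at hv hv'
      all_goals grind
  obtain ⟨M, hsub, hM⟩ := exists_maxMatching hmatch
  have habM : s(a, b) ∈ M := hsub (by simp)
  have hcdM : s(c, d) ∈ M := hsub (by simp)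
  have hA : ∀ g ∈ M, a ∈ g → g = s(a, b) := fun g hg hag ↦ by
    by_contra hne
    exact hM.1.2 g hg _ habM hne a hag (Sym2.mem_mk_left a b)
  have hC : ∀ g ∈ M, c ∈ g → g = s(c, d) := fun g hg hcg ↦ by
    by_contra hne
    exact hM.1.2 g hg _ hcdM hne c hcg (Sym2.mem_mk_left c d)
  have hmatch' : Matching G (insert s(a, c) (M \ {s(a, b), s(c, d)})) := by
    refine ⟨Set.insert_subset hac (Set.sdiff_subset.trans hM.1.1), ?_⟩
    rintro g (rfl | ⟨hg, hg'⟩) k (rfl | ⟨hk, hk'⟩) hgk v hv hv'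
    · exact hgk rfl
    · rcases Sym2.mem_iff.1 hv with rfl | rfl
      · exact hk' (Or.inl (hA k hk hv'))
      · exact hk' (Or.inr (hC k hk hv'))
    · rcases Sym2.mem_iff.1 hv' with rfl | rfl
      · exact hg' (Or.inl (hA g hg hv))
      · exact hg' (Or.inr (hC g hg hv))
    · exact hM.1.2 g hg k hk hgk v hv hv'
  obtain ⟨M', hsub', hM'⟩ := exists_maxMatching hmatch'
  have hacM' : s(a, c) ∈ M' := hsub' (Set.mem_insert _ _)
  obtain ⟨g, hgM', hgne, hdg⟩ := covered_of_robust hM' (h M' hM') hacM'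
    (connected_of_not_isBridge hG hbac) hcd hda
  obtain ⟨x, rfl⟩ := Sym2.mem_iff_exists.1 hdg
  have hdx : G.Adj d x := hM'.1.1 hgM'
  have hxa : x ≠ a := by
    rintro rfl
    exact hM'.1.2 _ hgM' _ hacM' hgne x (Sym2.mem_mk_right d x) (Sym2.mem_mk_left x c)
  have hxc : x ≠ c := by
    rintro rfl
    exact hM'.1.2 _ hgM' _ hacM' hgne x (Sym2.mem_mk_right d x) (Sym2.mem_mk_right a x)
  obtain ⟨k, hkM, hkne, hxk⟩ := covered_of_robust hM (h M hM) hcdM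
    (connected_of_not_isBridge hG hbcd) hdx hxc
  have hkab : k ≠ s(a, b) := by
    rintro rfl
    rcases Sym2.mem_iff.1 hxk with rfl | rfl
    · exact hxa rfl
    · exact hndb hdx
  -- So `k` survives in `M'`, where it meets `dx` at `x`; hence `k = dx`, which meets `cd` in `M`.
  have hkM' : k ∈ M' := hsub' (Or.inr ⟨hkM, by simp [hkab, hkne]⟩)
  have hk : k = s(d, x) := by
    by_contra hne
    exact hM'.1.2 k hkM' _ hgM' hne x hxk (Sym2.mem_mk_right d x)
  subst hk
  exact hM.1.2 _ hkM _ hcdM hkne d (Sym2.mem_mk_left d x) (Sym2.mem_mk_right c d)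
end

section
/- For every natural number k ≥ 1, there exists a finite connected simple graph G such that every maximal independent set of G is k-robust, but some maximal independent set of G is not (k+1)-robust. Consequently, the class of connected graphs in which every maximal independent set is (k+1)-robust is strictly contained in the class of connected graphs in which every maximal independent set is k-robust. -/
/-!
The first conjunct holds because a set of at most `k` edges has at most `k + 1` edges.

For the second, take the complete tripartite graph with three parts of size `k + 1`.  Its maximal
independent sets are exactly the three parts (`maxIndep_eq_part`), so a vertex `v` outside such a
set `S` has `k + 1` neighbours in `S`.  Deleting at most `k` edges leaves `v` a neighbour in `S`,
so `S` stays maximal (`tripartite_robust`).  Deleting all `k + 1` edges from `v` to `S` makes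
`S ∪ {v}` independent, while the graph stays connected through the third part
(`cut_connected`).
-/

/-- An independent set: no two vertices of `S` are adjacent. -/
def Indep {V : Type*} (G : SimpleGraph V) (S : Set V) : Prop :=
  ∀ ⦃u⦄, u ∈ S → ∀ ⦃v⦄, v ∈ S → ¬G.Adj u v

/-- A maximal independent set: independent and not properly contained in
any independent set. -/
def MaxIndep {V : Type*} (G : SimpleGraph V) (S : Set V) : Prop :=
  Indep G S ∧ ∀ T : Set V, Indep G T → S ⊆ T → T = S

/-- `S` is `k`-robust: after deleting any set `F` of at most `k` edges of `G`
that keeps the graph connected, `S` is still a maximal independent set. -/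
def RobustMIS {V : Type*} (G : SimpleGraph V) (k : ℕ) (S : Set V) : Prop :=
  ∀ F : Finset (Sym2 V), ↑F ⊆ G.edgeSet → F.card ≤ k →
    (G.deleteEdges ↑F).Connected → MaxIndep (G.deleteEdges ↑F) S

/-- The complete tripartite graph with parts of size `k + 1`: the vertices are the numbers below
`3 * k + 3`, and the parts are the residue classes modulo `3`. -/
def tripartite (k : ℕ) : SimpleGraph (Fin (3 * k + 3)) where
  Adj u v := u.val % 3 ≠ v.val % 3
  symm := ⟨fun _ _ h => h.symm⟩
  loopless := ⟨fun _ h => h rfl⟩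

/-- The `i`-th vertex of the part with residue `c`. -/
def partVertex (k c : ℕ) (hc : c < 3) (i : Fin (k + 1)) : Fin (3 * k + 3) :=
  ⟨3 * i.val + c, by have := i.isLt; omega⟩

/-- The edges joining `v` to the part with residue `c` (when `v` lies outside that part). -/
def cut (k c : ℕ) (hc : c < 3) (v : Fin (3 * k + 3)) : Finset (Sym2 (Fin (3 * k + 3))) :=
  Finset.univ.image fun i => s(v, partVertex k c hc i)

lemma cut_card (k c : ℕ) (hc : c < 3) (v : Fin (3 * k + 3)) : (cut k c hc v).card = k + 1 := by
  rw [cut, Finset.card_image_of_injective, Finset.card_univ, Fintype.card_fin]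
  intro i j h
  have h' := Sym2.congr_right.mp h
  simp only [partVertex, Fin.mk.injEq] at h'
  ext
  omega

lemma mem_cut {k c : ℕ} {hc : c < 3} {v : Fin (3 * k + 3)} {e : Sym2 (Fin (3 * k + 3))} :
    e ∈ cut k c hc v ↔ ∃ w : Fin (3 * k + 3), w.val % 3 = c ∧ s(v, w) = e := by
  simp only [cut, Finset.mem_image, Finset.mem_univ, true_and]
  constructor
  · rintro ⟨i, rfl⟩
    exact ⟨_, by simp only [partVertex]; omega, rfl⟩
  · rintro ⟨w, hw, rfl⟩
    refine ⟨⟨w.val / 3, by have := w.isLt; omega⟩, ?_⟩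
    congr 2
    ext
    simp only [partVertex]
    omega

lemma part_indep (k c : ℕ) : Indep (tripartite k) {w | w.val % 3 = c} :=
  fun _ hu _ hv h => h (hu.trans hv.symm)

lemma part_maxIndep (k c : ℕ) (hc : c < 3) : MaxIndep (tripartite k) {w | w.val % 3 = c} := by
  refine ⟨part_indep k c, fun T hT hST => Set.Subset.antisymm (fun v hv => ?_) hST⟩
  have h0 : partVertex k c hc 0 ∈ T := hST (by simp [partVertex, Nat.mod_eq_of_lt hc])
  have := not_not.mp (hT hv h0)
  simpa [partVertex, Nat.mod_eq_of_lt hc] using this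

lemma maxIndep_eq_part {k : ℕ} {S : Set (Fin (3 * k + 3))} (hS : MaxIndep (tripartite k) S) :
    ∃ c < 3, S = {w | w.val % 3 = c} := by
  obtain ⟨u, hu⟩ : S.Nonempty := by
    by_contra h
    rw [Set.not_nonempty_iff_eq_empty] at h
    have h0 := hS.2 _ (part_indep k 0) (by simp [h])
    have : (0 : Fin (3 * k + 3)) ∈ S := h0 ▸ (by simp)
    simp [h] at this
  exact ⟨u.val % 3, Nat.mod_lt _ (by norm_num),
    (hS.2 _ (part_indep k _) fun v hv => not_not.mp (hS.1 hv hu)).symm⟩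

lemma tripartite_robust {k : ℕ} {S : Set (Fin (3 * k + 3))} (hS : MaxIndep (tripartite k) S) :
    RobustMIS (tripartite k) k S := by
  obtain ⟨c, hc, rfl⟩ := maxIndep_eq_part hS
  intro F _ hcard _
  refine ⟨fun u hu v hv h => part_indep k c hu hv (SimpleGraph.deleteEdges_le _ h),
    fun T hT hST => Set.Subset.antisymm (fun v hv => ?_) hST⟩
  by_contra hvc
  -- If `v` can be added to the part, all `k + 1` edges joining it to the part lie in `F`.
  have hsub : cut k c hc v ⊆ F := by
    intro e he
    obtain ⟨w, hw, rfl⟩ := mem_cut.mp he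
    by_contra hF
    refine hT hv (hST hw) (SimpleGraph.deleteEdges_adj.mpr ⟨fun h => hvc (h.trans hw), ?_⟩)
    exact_mod_cast hF
  have := Finset.card_le_card hsub
  rw [cut_card] at this
  omega

/-- Deleting all edges from the vertex `1` to the part of `0` keeps the graph connected, since
every vertex still has a path to the vertex `2`. -/
lemma cut_connected (k : ℕ) :
    ((tripartite k).deleteEdges ↑(cut k 0 (by norm_num) ⟨1, by omega⟩)).Connected := by
  set H := (tripartite k).deleteEdges ↑(cut k 0 (by norm_num) ⟨1, by omega⟩) with hH
  have adj : ∀ u v : Fin (3 * k + 3), u.val % 3 = 2 → v.val % 3 ≠ 2 → H.Adj v u := by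
    intro u v hu hv
    refine SimpleGraph.deleteEdges_adj.mpr ⟨fun h => hv (h.trans hu), fun h => ?_⟩
    obtain ⟨w, hw, he⟩ := mem_cut.mp (Finset.mem_coe.mp h)
    rcases Sym2.eq_iff.mp he with ⟨h1, h2⟩ | ⟨h1, h2⟩
    · subst h2; omega
    · subst h1; simp at hu
  have reach : ∀ v, H.Reachable v ⟨2, by omega⟩ := by
    intro v
    by_cases hv : v.val % 3 = 2
    · exact (adj v ⟨1, by omega⟩ hv (by simp)).symm.reachable.trans
        (adj ⟨2, by omega⟩ ⟨1, by omega⟩ (by simp) (by simp)).reachable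
    · exact (adj ⟨2, by omega⟩ v (by simp) hv).reachable
  exact { preconnected := fun u v => (reach u).trans (reach v).symm, nonempty := ⟨0⟩ }

/-- For every `k ≥ 1`: any connected graph in which every MIS is
`(k+1)`-robust also has every MIS `k`-robust, and there exists a finite
connected graph in which every MIS is `k`-robust but some MIS is not
`(k+1)`-robust.  Hence the `(k+1)`-robust universal class is strictly
contained in the `k`-robust one. -/
theorem MIS_universal_strict_hierarchy (k : ℕ) (hk : 1 ≤ k) :
    (∀ (n : ℕ) (G : SimpleGraph (Fin n)), G.Connected →
      (∀ S : Set (Fin n), MaxIndep G S → RobustMIS G (k + 1) S) →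
      (∀ S : Set (Fin n), MaxIndep G S → RobustMIS G k S)) ∧
    (∃ (n : ℕ) (G : SimpleGraph (Fin n)), G.Connected ∧
      (∀ S : Set (Fin n), MaxIndep G S → RobustMIS G k S) ∧
      (∃ S : Set (Fin n), MaxIndep G S ∧ ¬RobustMIS G (k + 1) S)) := by
  refine ⟨fun n G _ h S hS F hF hc => h S hS F hF (hc.trans k.le_succ),
    3 * k + 3, tripartite k, (cut_connected k).mono (SimpleGraph.deleteEdges_le _),
    fun S hS => tripartite_robust hS, {w | w.val % 3 = 0}, part_maxIndep k 0 (by norm_num), ?_⟩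
  intro hrob
  have hmax := hrob (cut k 0 (by norm_num) ⟨1, by omega⟩) ?_ (cut_card ..).le (cut_connected k)
  · -- The part of `0` together with the vertex `1` is independent after the deletion.
    have hT := hmax.2 (insert ⟨1, by omega⟩ {w | w.val % 3 = 0}) ?_ (Set.subset_insert _ _)
    · have : (⟨1, by omega⟩ : Fin (3 * k + 3)) ∈ {w : Fin (3 * k + 3) | w.val % 3 = 0} :=
        hT ▸ Set.mem_insert _ _
      simp at this
    · intro u hu v hv huv
      obtain ⟨hadj, hnot⟩ := SimpleGraph.deleteEdges_adj.mp huv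
      rcases hu with rfl | hu <;> rcases hv with rfl | hv
      · exact hadj rfl
      · exact hnot (Finset.mem_coe.mpr (mem_cut.mpr ⟨v, hv, rfl⟩))
      · exact hnot (Finset.mem_coe.mpr (mem_cut.mpr ⟨u, hu, Sym2.eq_swap⟩))
      · exact hadj (hu.trans hv.symm)
  · intro e he
    obtain ⟨w, hw, rfl⟩ := mem_cut.mp (Finset.mem_coe.mp he)
    rw [SimpleGraph.mem_edgeSet]
    intro h
    rw [hw] at h
    simp at h
end

section
/- Let G be a finite 2-edge-connected simple graph. A vertex set S is a 1-robust maximal independent set of G if and only if S is an independent 2-dominating set of G. -/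
/-- A graph is 2-edge-connected if it is connected and the deletion of any
single edge leaves it connected. -/
def TwoEdgeConnected {V : Type*} (G : SimpleGraph V) : Prop :=
  G.Connected ∧ ∀ e ∈ G.edgeSet, (G.deleteEdges {e}).Connected

/-- An independent 2-dominating set: an independent set such that every
vertex outside it has at least two neighbors inside it. -/
def IndepTwoDominating {V : Type*} (G : SimpleGraph V) (S : Set V) : Prop :=
  Indep G S ∧ ∀ v ∉ S, ∃ a ∈ S, ∃ b ∈ S, a ≠ b ∧ G.Adj a v ∧ G.Adj b v

/-- An independent set is maximal exactly when it is dominating. -/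
theorem maxIndep_iff_dominating {V : Type*} (G : SimpleGraph V) (S : Set V) :
    MaxIndep G S ↔ Indep G S ∧ ∀ v ∉ S, ∃ a ∈ S, G.Adj a v := by
  constructor
  · rintro ⟨hI, hM⟩
    refine ⟨hI, fun v hv => ?_⟩
    by_contra! hn
    have hT : Indep G (insert v S) := by
      rintro x (rfl | hx) y (rfl | hy) h
      · exact G.irrefl h
      · exact hn y hy h.symm
      · exact hn x hx h
      · exact hI hx hy h
    exact hv (hM _ hT (Set.subset_insert v S) ▸ Set.mem_insert v S)
  · rintro ⟨hI, hD⟩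
    refine ⟨hI, fun T hT hST => Set.Subset.antisymm (fun v hv => ?_) hST⟩
    by_contra hvS
    obtain ⟨a, ha, hav⟩ := hD v hvS
    exact hT (hST ha) hv hav

/-- In a finite 2-edge-connected graph, the 1-robust maximal independent sets
are exactly the independent 2-dominating sets. -/
theorem one_robust_MIS_iff_indep_two_dominating {V : Type*} [Fintype V]
    (G : SimpleGraph V) (hG : TwoEdgeConnected G) (S : Set V) :
    (MaxIndep G S ∧ RobustMIS G 1 S) ↔ IndepTwoDominating G S := by
  constructor
  · rintro ⟨hM, hR⟩
    refine ⟨hM.1, fun v hv => ?_⟩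
    obtain ⟨a, ha, hav⟩ := ((maxIndep_iff_dominating G S).1 hM).2 v hv
    have hM' := hR {s(a, v)} (by simpa using hav) (by simp)
      (by simpa using hG.2 s(a, v) hav)
    obtain ⟨b, hb, hbv⟩ := ((maxIndep_iff_dominating _ S).1 hM').2 v hv
    rw [SimpleGraph.deleteEdges_adj] at hbv
    refine ⟨a, ha, b, hb, ?_, hav, hbv.1⟩
    rintro rfl
    exact hbv.2 (by simp)
  · rintro ⟨hI, hD⟩
    refine ⟨(maxIndep_iff_dominating G S).2 ⟨hI, fun v hv => ?_⟩, fun F _ hF _ =>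
      (maxIndep_iff_dominating _ S).2 ⟨fun u hu w hw h =>
        hI hu hw (SimpleGraph.deleteEdges_adj.1 h).1, fun v hv => ?_⟩⟩
    · obtain ⟨a, ha, -, -, -, hav, -⟩ := hD v hv
      exact ⟨a, ha, hav⟩
    · obtain ⟨a, ha, b, hb, hab, hav, hbv⟩ := hD v hv
      by_cases haF : s(a, v) ∈ F
      · refine ⟨b, hb, SimpleGraph.deleteEdges_adj.2 ⟨hbv, fun hbF => hab ?_⟩⟩
        exact Sym2.congr_left.1 (Finset.card_le_one.1 hF _ haF _ hbF)
      · exact ⟨a, ha, SimpleGraph.deleteEdges_adj.2 ⟨hav, haF⟩⟩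
end

section
/- Let G be a finite 2-edge-connected simple graph with vertex set V, let k > 1, and let G' be the graph with vertex set V × {1,…,k} in which (u,x) and (v,y) are adjacent if and only if u and v are adjacent in G. Then G has a 1-robust maximal independent set if and only if G' has a (2k−1)-robust maximal independent set. -/
/-- Maximality of an independent set amounts to domination. -/
theorem maxIndep_iff {V : Type*} (G : SimpleGraph V) (S : Set V) :
    MaxIndep G S ↔ Indep G S ∧ ∀ v ∉ S, ∃ u ∈ S, G.Adj v u := by
  constructor
  · rintro ⟨hi, hm⟩
    refine ⟨hi, fun v hv => ?_⟩
    by_contra! h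
    refine hv ?_
    rw [← hm (insert v S) ?_ (Set.subset_insert v S)]
    · exact Set.mem_insert v S
    · intro a ha b hb hab
      rcases ha with rfl | ha <;> rcases hb with rfl | hb
      · exact hab.ne rfl
      · exact h _ hb hab
      · exact h _ ha hab.symm
      · exact hi ha hb hab
  · rintro ⟨hi, hd⟩
    refine ⟨hi, fun T hT hST => Set.Subset.antisymm (fun v hv => ?_) hST⟩
    by_contra hvS
    obtain ⟨u, hu, hvu⟩ := hd v hvS
    exact hT hv (hST hu) hvu

theorem robustMIS_of_neighbors {V : Type*} (G : SimpleGraph V) (S : Set V) (k : ℕ)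
    (hi : Indep G S)
    (h : ∀ v ∉ S, ∃ N : Finset V, k < N.card ∧ ∀ u ∈ N, u ∈ S ∧ G.Adj v u) :
    RobustMIS G k S := by
  classical
  intro F _ hF _
  rw [maxIndep_iff]
  refine ⟨fun u hu v hv huv => hi hu hv (G.deleteEdges_le _ huv), fun v hv => ?_⟩
  obtain ⟨N, hN, hNS⟩ := h v hv
  by_contra! hno
  -- Otherwise all edges from `v` to `N` are in `F`, and they are pairwise distinct.
  have hle : N.card ≤ F.card := by
    refine Finset.card_le_card_of_injOn (fun u => s(v, u)) (fun u hu => ?_) ?_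
    · by_contra hu'
      refine hno u (hNS u hu).1 ?_
      rw [SimpleGraph.deleteEdges_adj]
      exact ⟨(hNS u hu).2, hu'⟩
    · intro a _ b _ hab
      exact Sym2.congr_right.1 hab
  omega

/-- Deleting the edge from an outside vertex to one neighbour in `S` keeps the graph connected, so
1-robustness supplies a second neighbour. -/
theorem exists_two_neighbors {V : Type*} {G : SimpleGraph V} (hG : TwoEdgeConnected G)
    {S : Set V} (hS : MaxIndep G S) (hR : RobustMIS G 1 S) {v : V} (hv : v ∉ S) :
    ∃ u w, u ≠ w ∧ u ∈ S ∧ w ∈ S ∧ G.Adj v u ∧ G.Adj v w := by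
  obtain ⟨u, hu, hvu⟩ := ((maxIndep_iff G S).1 hS).2 v hv
  have h := hR {s(v, u)} (by simpa using hvu) (by simp)
    (by simpa using hG.2 s(v, u) hvu)
  obtain ⟨w, hw, hvw⟩ := ((maxIndep_iff _ S).1 h).2 v hv
  rw [SimpleGraph.deleteEdges_adj] at hvw
  refine ⟨u, w, ?_, hu, hw, hvu, hvw.1⟩
  rintro rfl
  exact hvw.2 (by simp)

/-- In a 2-edge-connected graph every vertex with a neighbour `u` has a neighbour other than
`u`. -/
theorem TwoEdgeConnected.exists_other_neighbor {V : Type*} {G : SimpleGraph V}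
    (hG : TwoEdgeConnected G) {v u : V} (hvu : G.Adj v u) : ∃ w, w ≠ u ∧ G.Adj v w := by
  have : Nontrivial V := ⟨v, u, hvu.ne⟩
  obtain ⟨w, hw⟩ := (hG.2 s(v, u) hvu).preconnected.exists_adj_of_nontrivial v
  rw [SimpleGraph.deleteEdges_adj] at hw
  refine ⟨w, ?_, hw.1⟩
  rintro rfl
  exact hw.2 rfl

/-- Deleting edges that all join the vertex `(v, x)` to copies of one neighbour `u` of `v` keeps
the blow-up connected. -/
theorem blowup_deleteEdges_connected {V : Type*} {G : SimpleGraph V} (hG : TwoEdgeConnected G)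
    {k : ℕ} {v u : V} (hvu : G.Adj v u) {x y : Fin k} (hxy : y ≠ x)
    (F : Set (Sym2 (V × Fin k))) (hF : ∀ e ∈ F, ∃ i, e = s((v, x), (u, i))) :
    (((SimpleGraph.comap Prod.fst G).deleteEdges F)).Connected := by
  have : Nontrivial V := ⟨v, u, hvu.ne⟩
  set H := (SimpleGraph.comap Prod.fst G : SimpleGraph (V × Fin k)).deleteEdges F with hH
  have hadj : ∀ p q : V × Fin k, G.Adj p.1 q.1 → p ≠ (v, x) → q ≠ (v, x) → H.Adj p q := by
    intro p q hpq hp hq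
    rw [hH, SimpleGraph.deleteEdges_adj]
    refine ⟨hpq, fun he => ?_⟩
    obtain ⟨i, hi⟩ := hF _ he
    rcases Sym2.eq_iff.1 hi with ⟨h, _⟩ | ⟨_, h⟩
    · exact hp h
    · exact hq h
  have hy : ∀ a : V, (a, y) ≠ (v, x) := fun a h => hxy (congrArg Prod.snd h)
  -- The layer of `y` is a copy of `G` in `H`.
  let φ : G →g H := ⟨fun a => (a, y), fun {a b} hab => hadj (a, y) (b, y) hab (hy a) (hy b)⟩
  have hlayer : ∀ a b : V, H.Reachable (a, y) (b, y) := fun a b =>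
    (hG.1.preconnected a b).map φ
  have hstep : ∀ p : V × Fin k, ∃ b, H.Adj p (b, y) := by
    intro p
    by_cases hp : p = (v, x)
    · obtain ⟨w, hwu, hvw⟩ := hG.exists_other_neighbor hvu
      refine ⟨w, ?_⟩
      rw [hH, SimpleGraph.deleteEdges_adj, hp]
      refine ⟨hvw, fun he => ?_⟩
      obtain ⟨i, hi⟩ := hF _ he
      exact hwu (congrArg Prod.fst (Sym2.congr_right.1 hi))
    · obtain ⟨b, hb⟩ := hG.1.preconnected.exists_adj_of_nontrivial p.1
      exact ⟨b, hadj p (b, y) hb hp (hy b)⟩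
  have : Nonempty (V × Fin k) := ⟨(v, x)⟩
  refine SimpleGraph.Connected.mk fun p q => ?_
  obtain ⟨a, ha⟩ := hstep p
  obtain ⟨b, hb⟩ := hstep q
  exact ha.reachable.trans ((hlayer a b).trans hb.reachable.symm)

/-- Copies of the same vertex have equal neighbourhoods, so a maximal independent set contains all
of them or none. -/
theorem mem_of_twin {V : Type*} {G : SimpleGraph V} {k : ℕ} {T : Set (V × Fin k)}
    (hT : MaxIndep (SimpleGraph.comap Prod.fst G) T) {v : V} {x : Fin k} (h : (v, x) ∈ T)
    (y : Fin k) : (v, y) ∈ T := by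
  rw [maxIndep_iff] at hT
  by_contra hy
  obtain ⟨p, hp, hadj⟩ := hT.2 _ hy
  exact hT.1 h hp hadj

/-- Let `G'` be the graph on `V × Fin k` where `(u,x)` and `(v,y)` are
adjacent iff `u` and `v` are adjacent in `G`.  For a 2-edge-connected graph
`G` and `k > 1`, `G` has a 1-robust maximal independent set iff `G'` has a
`(2k−1)`-robust maximal independent set. -/
theorem one_robust_iff_blowup_robust {V : Type*} [Fintype V]
    (G : SimpleGraph V) (hG : TwoEdgeConnected G) (k : ℕ) (hk : 1 < k) :
    (∃ S : Set V, MaxIndep G S ∧ RobustMIS G 1 S) ↔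
      (∃ T : Set (V × Fin k), MaxIndep (SimpleGraph.comap Prod.fst G) T ∧
        RobustMIS (SimpleGraph.comap Prod.fst G) (2 * k - 1) T) := by
  classical
  let x : Fin k := ⟨0, by omega⟩
  let y : Fin k := ⟨1, hk⟩
  have hxy : y ≠ x := by simp [x, y]
  constructor
  · rintro ⟨S, hS, hR⟩
    have hi : Indep (SimpleGraph.comap Prod.fst G) (Prod.fst ⁻¹' S : Set (V × Fin k)) :=
      fun p hp q hq hpq => hS.1 hp hq hpq
    refine ⟨Prod.fst ⁻¹' S, (maxIndep_iff _ _).2 ⟨hi, fun p hp => ?_⟩,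
      robustMIS_of_neighbors _ _ _ hi fun p hp => ?_⟩
    · obtain ⟨u, hu, hpu⟩ := ((maxIndep_iff G S).1 hS).2 p.1 hp
      exact ⟨(u, x), hu, hpu⟩
    · obtain ⟨u, w, huw, hu, hw, hpu, hpw⟩ := exists_two_neighbors hG hS hR (v := p.1) hp
      refine ⟨{u, w} ×ˢ Finset.univ, ?_, ?_⟩
      · rw [Finset.card_product, Finset.card_pair huw, Finset.card_univ, Fintype.card_fin]
        omega
      · rintro ⟨a, i⟩ ha
        have ha' : a = u ∨ a = w := by simpa using ha
        rcases ha' with rfl | rfl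
        · exact ⟨hu, hpu⟩
        · exact ⟨hw, hpw⟩
  · rintro ⟨T, hT, hR⟩
    have hT' := (maxIndep_iff _ _).1 hT
    -- As `T` is a union of twin classes, its projection can be read off in the layer of `x`.
    let S : Set V := {a | (a, x) ∈ T}
    have hi : Indep G S := fun a ha b hb hab => hT'.1 ha hb hab
    have hd : ∀ v ∉ S, ∃ u ∈ S, G.Adj v u := by
      intro v hv
      obtain ⟨⟨u, i⟩, hu, hvu⟩ := hT'.2 (v, x) hv
      exact ⟨u, mem_of_twin hT hu x, hvu⟩
    refine ⟨S, (maxIndep_iff G S).2 ⟨hi, hd⟩, robustMIS_of_neighbors _ _ _ hi fun v hv => ?_⟩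
    obtain ⟨u, hu, hvu⟩ := hd v hv
    -- Isolate `(v, x)` from the copies of `u`; robustness yields a neighbour of `v` in `S`
    -- different from `u`.
    let F : Finset (Sym2 (V × Fin k)) := Finset.univ.image fun i => s((v, x), (u, i))
    have hF : ∀ e ∈ (F : Set (Sym2 (V × Fin k))), ∃ i, e = s((v, x), (u, i)) := by
      intro e he
      obtain ⟨i, _, rfl⟩ := Finset.mem_image.1 (Finset.mem_coe.1 he)
      exact ⟨i, rfl⟩
    have hcard : F.card ≤ 2 * k - 1 := by
      have : F.card ≤ k := by
        simpa using Finset.card_image_le (s := (Finset.univ : Finset (Fin k)))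
          (f := fun i => s((v, x), (u, i)))
      omega
    have hsub : (F : Set (Sym2 (V × Fin k))) ⊆ (SimpleGraph.comap Prod.fst G).edgeSet := by
      intro e he
      obtain ⟨i, rfl⟩ := hF e he
      exact hvu
    have hM := hR F hsub hcard (blowup_deleteEdges_connected hG hvu hxy _ hF)
    obtain ⟨⟨w, i⟩, hw, hvw⟩ := ((maxIndep_iff _ _).1 hM).2 (v, x) hv
    rw [SimpleGraph.deleteEdges_adj] at hvw
    have huw : u ≠ w := by
      rintro rfl
      exact hvw.2 (Finset.mem_coe.2 (Finset.mem_image_of_mem _ (Finset.mem_univ i)))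
    refine ⟨{u, w}, by rw [Finset.card_pair huw]; omega, fun a ha => ?_⟩
    rcases Finset.mem_insert.1 ha with rfl | ha
    · exact ⟨hu, hvu⟩
    · rw [Finset.mem_singleton.1 ha]
      exact ⟨mem_of_twin hT hw x, hvw.1⟩
end
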